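/- Let G be a connected claw-free graph with maximum degree Δ(G) = 3 that contains no A_i for any i of the form i = 3j+1 (j a positive integer). Then G has a dynamic 3-coloring if and only if G is not isomorphic to a graph obtained from K_4 by subdividing one edge m times with m ≡ 0 or 1 (mod 3). -/

import Mathlib

open SimpleGraph

/-- A dynamic `k`-coloring of `G`: a proper vertex coloring such that every vertex
with at least two neighbors sees at least two distinct colors among its neighbors. -/
def IsDynamicColoring {V : Type*} (G : SimpleGraph V) (k : ℕ) (c : V → Fin k) : Prop :=
  (∀ ⦃u v : V⦄, G.Adj u v → c u ≠ c v) ∧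
  ∀ v : V, 2 ≤ (G.neighborSet v).ncard →
    ∃ u w : V, G.Adj v u ∧ G.Adj v w ∧ c u ≠ c w

/-- The dynamic chromatic number: the least `k` admitting a dynamic `k`-coloring. -/
noncomputable def dynamicChromaticNumber {V : Type*} (G : SimpleGraph V) : ℕ :=
  sInf {k : ℕ | ∃ c : V → Fin k, IsDynamicColoring G k c}

/-- `K4sub m`: the graph obtained from `K_4` on `{a, b, c, d}` by subdividing the edge
`ab` `m` times. Vertices: `Sum.inl i` for `i : Fin (m+2)` is the path
`a = p_0, w_1, …, w_m, b = p_{m+1}`, and `Sum.inr 0 = c`, `Sum.inr 1 = d`. -/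
def K4sub (m : ℕ) : SimpleGraph (Fin (m + 2) ⊕ Fin 2) :=
  SimpleGraph.fromRel (fun x y =>
    match x, y with
    | Sum.inl i, Sum.inl j => (i : ℕ) + 1 = (j : ℕ)
    | Sum.inl i, Sum.inr _ => (i : ℕ) = 0 ∨ (i : ℕ) = m + 1
    | Sum.inr _, Sum.inl _ => False
    | Sum.inr _, Sum.inr _ => True)

/-- `G` is claw-free: no induced subgraph isomorphic to `K_{1,3}`. -/
def ClawFree {V : Type*} (G : SimpleGraph V) : Prop :=
  ¬ ∃ v a b c : V, a ≠ b ∧ a ≠ c ∧ b ≠ c ∧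
    G.Adj v a ∧ G.Adj v b ∧ G.Adj v c ∧ ¬ G.Adj a b ∧ ¬ G.Adj a c ∧ ¬ G.Adj b c

/-- `G` contains an `A_i`: a path on `i` vertices whose `i - 2` internal vertices have
degree 2 in `G` and whose two end-vertices have degree 3 in `G`. -/
def HasAPath {V : Type*} (G : SimpleGraph V) (i : ℕ) : Prop :=
  ∃ v : ℕ → V,
    (∀ a b : ℕ, a < i → b < i → v a = v b → a = b) ∧
    (∀ a : ℕ, a + 1 < i → G.Adj (v a) (v (a + 1))) ∧
    (∀ a : ℕ, 0 < a → a + 1 < i → (G.neighborSet (v a)).ncard = 2) ∧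
    (G.neighborSet (v 0)).ncard = 3 ∧
    (G.neighborSet (v (i - 1))).ncard = 3

/-!
Contract every thread, i.e. every path whose inner vertices have degree 2, that joins two vertices
of degree 3. If the resulting simple graph on the vertices of degree 3 is 3-colorable, a coloring of
it extends to a dynamic 3-coloring of `G`: along a thread the colors in `ZMod 3` form an arithmetic
progression with nonzero difference, so that consecutive triples are rainbow. Such a progression
exists unless the `m + 2` vertices of the thread have distinct end colors and `m ≡ 2 (mod 3)`, which
would be an `A_{3j+1}`. A vertex of degree 3 lies in a triangle by claw-freeness, so it sees two
colors in any proper coloring.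

The contracted graph has maximum degree at most 3, so by Brooks' theorem it is 3-colorable unless it
contains a `K_4`. In that case each of the four vertices lies in a triangle of `G` which survives in
the `K_4`; two of these triangles share an edge, so all edges of the `K_4` but one are edges of `G`.
Hence `G`, being connected, is `K_4` with that one edge subdivided.
-/

section Brooks

variable {V α : Type*} {G : SimpleGraph V} {S T : Set V} {c : V → α}

/-- `c` properly colors the subgraph of `G` induced on `S`. The coloring is total, but its values
outside `S` are irrelevant, so that one function can be modified vertex by vertex. -/
def IsProperOn (G : SimpleGraph V) (S : Set V) (c : V → α) : Prop :=
  ∀ ⦃u⦄, u ∈ S → ∀ ⦃v⦄, v ∈ S → G.Adj u v → c u ≠ c v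

namespace IsProperOn

theorem mono (hc : IsProperOn G T c) (hST : S ⊆ T) : IsProperOn G S c :=
  fun _ hu _ hv => hc (hST hu) (hST hv)

theorem exists_union {c₁ c₂ : V → α} (h₁ : IsProperOn G S c₁) (h₂ : IsProperOn G T c₂)
    (hST : ∀ u ∈ S, ∀ v ∈ T, ¬ G.Adj u v) : ∃ c : V → α, IsProperOn G (S ∪ T) c := by
  classical
  refine ⟨S.piecewise c₁ c₂, fun u hu v hv huv => ?_⟩
  by_cases huS : u ∈ S <;> by_cases hvS : v ∈ S
  · simpa [huS, hvS] using h₁ huS hvS huv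
  · exact absurd huv (hST u huS v (hv.resolve_left hvS))
  · exact absurd huv.symm (hST v hvS u (hu.resolve_left huS))
  · simpa [huS, hvS] using h₂ (hu.resolve_left huS) (hv.resolve_left hvS) huv

theorem update_insert [DecidableEq V] {v : V} {a : α} (hc : IsProperOn G S c) (hv : v ∉ S)
    (ha : ∀ u ∈ S, G.Adj v u → a ≠ c u) : IsProperOn G (insert v S) (Function.update c v a) := by
  have hne : ∀ u ∈ S, u ≠ v := fun u hu => ne_of_mem_of_not_mem hu hv
  rintro u (rfl | hu) w (rfl | hw) huw
  · exact absurd huw G.irrefl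
  · simpa [hne w hw] using ha w hw huw
  · simpa [hne u hu] using (ha u hu huw.symm).symm
  · simpa [hne u hu, hne w hw] using hc hu hw huw

theorem exists_insert_of_ncard_image_lt {v : V} (hc : IsProperOn G S c) (hv : v ∉ S)
    (hlt : (c '' (G.neighborSet v ∩ S)).ncard < Nat.card α) :
    ∃ c' : V → α, Set.EqOn c' c S ∧ IsProperOn G (insert v S) c' := by
  classical
  obtain ⟨a, ha⟩ : ∃ a, a ∉ c '' (G.neighborSet v ∩ S) := by
    by_contra! hall
    rw [Set.eq_univ_of_forall hall, Set.ncard_univ] at hlt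
    exact hlt.false
  refine ⟨Function.update c v a, fun u hu => Function.update_of_ne ?_ _ _,
    hc.update_insert hv fun u hu hvu hac => ha ⟨u, ⟨hvu, hu⟩, hac.symm⟩⟩
  exact ne_of_mem_of_not_mem hu hv

variable [Finite V]

/-- The neighbor `u` of `v` costs no color: it is uncolored or repeats the color of another one. -/
theorem exists_insert {u v : V} (hc : IsProperOn G S c) (hv : v ∉ S)
    (hdeg : (G.neighborSet v).ncard ≤ Nat.card α) (hvu : G.Adj v u)
    (hu : u ∈ S → ∃ w, G.Adj v w ∧ w ≠ u ∧ c w = c u) :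
    ∃ c' : V → α, Set.EqOn c' c S ∧ IsProperOn G (insert v S) c' := by
  refine hc.exists_insert_of_ncard_image_lt hv ?_
  have hsub : c '' (G.neighborSet v ∩ S) ⊆ c '' (G.neighborSet v \ {u}) := by
    rintro _ ⟨x, ⟨hvx, hxS⟩, rfl⟩
    by_cases hxu : x = u
    · subst hxu
      obtain ⟨w, hvw, hwx, hcw⟩ := hu hxS
      exact ⟨w, ⟨hvw, hwx⟩, hcw⟩
    · exact ⟨x, ⟨hvx, hxu⟩, rfl⟩
  calc (c '' (G.neighborSet v ∩ S)).ncard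
      ≤ (c '' (G.neighborSet v \ {u})).ncard := Set.ncard_le_ncard hsub
    _ ≤ (G.neighborSet v \ {u}).ncard := Set.ncard_image_le
    _ < (G.neighborSet v).ncard := Set.ncard_sdiff_singleton_lt_of_mem hvu
    _ ≤ Nat.card α := hdeg

variable (hdeg : ∀ v, (G.neighborSet v).ncard ≤ Nat.card α)
include hdeg

theorem exists_extend_path {u w : V} {p : G.Walk u w} (hp : p.IsPath) (hc : IsProperOn G S c)
    (hpS : ∀ x ∈ p.support, x ∉ S) :
    ∃ c' : V → α, Set.EqOn c' c S ∧ IsProperOn G (S ∪ {x | x ∈ p.support ∧ x ≠ w}) c' := by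
  induction p generalizing S c with
  | nil => exact ⟨c, fun _ _ => rfl, hc.mono <| by simp⟩
  | @cons u v w huv p ih =>
    rw [Walk.cons_isPath_iff] at hp
    simp only [Walk.support_cons, List.mem_cons, forall_eq_or_imp] at hpS
    obtain ⟨c₁, heq₁, hc₁⟩ := hc.exists_insert hpS.1 (hdeg u) huv
      fun hv => absurd hv (hpS.2 v p.start_mem_support)
    have hpS₁ : ∀ x ∈ p.support, x ∉ insert u S := by
      rintro x hx (rfl | hxS)
      · exact hp.2 hx
      · exact hpS.2 x hx hxS
    obtain ⟨c₂, heq₂, hc₂⟩ := ih hp.1 hc₁ hpS₁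
    refine ⟨c₂, fun x hx => (heq₂ (Or.inr hx)).trans (heq₁ hx), hc₂.mono ?_⟩
    rintro x (hx | ⟨hx, hxw⟩)
    · exact Or.inl (Or.inr hx)
    · rw [Walk.support_cons, List.mem_cons] at hx
      exact hx.imp Or.inl fun hx => ⟨hx, hxw⟩

theorem exists_extend_path_of_eq {u w a b : V} {p : G.Walk u w} (hp : p.IsPath)
    (hc : IsProperOn G S c) (hpS : ∀ x ∈ p.support, x ∉ S) (ha : a ∈ S) (hb : b ∈ S)
    (hab : a ≠ b) (hcab : c a = c b) (hwa : G.Adj w a) (hwb : G.Adj w b) :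
    ∃ c' : V → α, IsProperOn G (S ∪ {x | x ∈ p.support}) c' := by
  obtain ⟨c₁, heq, hc₁⟩ := hc.exists_extend_path hdeg hp hpS
  have hw : w ∉ S ∪ {x | x ∈ p.support ∧ x ≠ w} := by
    rintro (hw | ⟨-, hw⟩)
    · exact hpS w p.end_mem_support hw
    · exact hw rfl
  obtain ⟨c₂, -, hc₂⟩ := hc₁.exists_insert hw (hdeg w) hwb
    fun _ => ⟨a, hwa, hab, by rw [heq ha, heq hb, hcab]⟩
  refine ⟨c₂, hc₂.mono ?_⟩
  rintro x (hx | hx)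
  · exact Or.inr (Or.inl hx)
  · exact (eq_or_ne x w).imp id fun hxw => Or.inr ⟨hx, hxw⟩

end IsProperOn

theorem exists_walk_append_cons_of_mem_of_notMem {u r : V} (p : G.Walk u r)
    (hT : ∃ t ∈ p.support, t ∈ T) (hr : r ∉ T) :
    ∃ (x y : V) (q₁ : G.Walk u x) (hxy : G.Adj x y) (q₂ : G.Walk y r),
      p = q₁.append (.cons hxy q₂) ∧ x ∈ T ∧ y ∉ T := by
  induction p with
  | nil => exact absurd hT (by simpa using hr)
  | @cons u v r huv p ih =>
    by_cases hp : ∃ t ∈ p.support, t ∈ T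
    · obtain ⟨x, y, q₁, hxy, q₂, rfl, hx, hy⟩ := ih hp hr
      exact ⟨x, y, .cons huv q₁, hxy, q₂, rfl, hx, hy⟩
    · obtain ⟨t, ht, htT⟩ := hT
      obtain rfl : t = u :=
        (List.mem_cons.1 ht).resolve_right fun ht => hp ⟨t, ht, htT⟩
      exact ⟨t, v, .nil, huv, p, rfl, htT, fun hv => hp ⟨v, p.start_mem_support, hv⟩⟩

theorem IsProperOn.exists_union_cycle [Finite V]
    (hdeg : ∀ v, (G.neighborSet v).ncard ≤ Nat.card α) (hc : IsProperOn G S c) {u r : V}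
    {q : G.Walk u r} (hq : q.IsPath) (hru : G.Adj r u) (hqS : ∀ x ∈ q.support, x ∉ S)
    (hr : ∀ w ∈ S, ¬ G.Adj r w) (hedge : ∃ t ∈ q.support, ∃ w ∈ S, G.Adj t w) :
    ∃ c' : V → α, IsProperOn G (S ∪ {x | x ∈ q.support}) c' := by
  classical
  obtain ⟨x, y, q₁, hxy, q₂, rfl, ⟨w, hwS, hxw⟩, hy⟩ :=
    exists_walk_append_cons_of_mem_of_notMem (T := {x | ∃ w ∈ S, G.Adj x w}) q hedge
      fun ⟨w, hw, hrw⟩ => hr w hw hrw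
  have hyS : y ∉ S := hqS y (by simp)
  have hwy : w ≠ y := ne_of_mem_of_not_mem hwS hyS
  have hc₁ := hc.update_insert (a := c w) hyS fun v hv hyv => absurd ⟨v, hv, hyv⟩ hy
  -- The cycle, opened at the edge from `x` to `y` and traversed from `y` around to `x`.
  obtain ⟨P, hP⟩ : ∃ P : G.Walk y x, P.support = q₂.support ++ q₁.support :=
    ⟨q₂.append (.cons hru q₁), by simp [Walk.support_append]⟩
  have hPpath : P.IsPath := by
    rw [Walk.isPath_def, hP, List.nodup_append_comm]
    simpa [Walk.support_append] using hq.support_nodup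
  have hPq : ∀ z, z ∈ P.support ↔ z ∈ (q₁.append (.cons hxy q₂)).support := by
    intro z
    rw [hP, Walk.support_append, Walk.support_cons, List.tail_cons, List.mem_append,
      List.mem_append, or_comm]
  cases P with
  | nil => exact absurd hxy G.irrefl
  | cons hyz P =>
    rw [Walk.cons_isPath_iff] at hPpath
    have hPS : ∀ z ∈ P.support, z ∉ insert y S := by
      rintro z hz (rfl | hzS)
      · exact hPpath.2 hz
      · exact hqS z ((hPq z).1 (by simp [hz])) hzS
    obtain ⟨c', hc'⟩ := hc₁.exists_extend_path_of_eq hdeg hPpath.1 hPS (Or.inr hwS) (Or.inl rfl) hwy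
      (by simp [hwy]) hxw hxy
    refine ⟨c', hc'.mono ?_⟩
    rintro z (hz | hz)
    · exact Or.inl (Or.inr hz)
    · have := (hPq z).2 hz
      rw [Walk.support_cons, List.mem_cons] at this
      exact this.imp Or.inl id

theorem exists_isPath_maximal [Finite V] {A : Set V} {s : V} (hs : s ∉ A) :
    ∃ (r : V) (p : G.Walk s r), p.IsPath ∧ (∀ x ∈ p.support, x ∉ A) ∧
      ∀ x, G.Adj r x → x ∈ A ∨ x ∈ p.support := by
  induction A using WellFoundedGT.induction generalizing s with
  | ind A ih =>
    by_cases hsA : ∀ x, G.Adj s x → x ∈ A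
    · exact ⟨s, .nil, .nil, by simpa using hs, fun x hx => Or.inl (hsA x hx)⟩
    push Not at hsA
    obtain ⟨x, hsx, hxA⟩ := hsA
    obtain ⟨r, p, hp, hpA, hr⟩ := ih (insert s A) (Set.ssubset_insert hs) (s := x)
      (by rintro (rfl | hx) <;> [exact G.irrefl hsx; exact hxA hx])
    refine ⟨r, .cons hsx p, hp.cons fun hsp => hpA s hsp (Or.inl rfl), ?_, fun y hry => ?_⟩
    · rw [Walk.support_cons, List.forall_mem_cons]
      exact ⟨hs, fun y hy hyA => hpA y hy (Or.inr hyA)⟩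
    · rw [Walk.support_cons, List.mem_cons, or_left_comm, ← or_assoc]
      exact hr y hry

theorem exists_closing_suffix {a r x : V} {p : G.Walk a r} (hp : p.IsPath)
    (hr : ∀ y, G.Adj r y → y ∈ p.support) (hrx : G.Adj r x) :
    ∃ (u : V) (q : G.Walk u r), q.IsPath ∧ G.Adj r u ∧ (∀ y ∈ q.support, y ∈ p.support) ∧
      ∀ y, G.Adj r y → y ∈ q.support := by
  induction p with
  | nil => exact absurd (List.mem_singleton.1 (hr x hrx)) hrx.ne'
  | @cons a v r hav p ih =>
    by_cases hra : G.Adj r a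
    · exact ⟨a, .cons hav p, hp, hra, fun _ => id, hr⟩
    obtain ⟨u, q, hq, hru, hqp, hrq⟩ := ih hp.of_cons (fun y hry => by
      refine (List.mem_cons.1 (hr y hry)).resolve_left ?_
      rintro rfl
      exact hra hry) hrx
    exact ⟨u, q, hq, hru, fun y hy => List.mem_cons_of_mem _ (hqp y hy), hrq⟩

theorem exists_adj_adj_not_adj_of_cliqueFree [Finite V] {v : V}
    (h : G.CliqueFree ((G.neighborSet v).ncard + 1)) :
    ∃ a b, G.Adj v a ∧ G.Adj v b ∧ a ≠ b ∧ ¬ G.Adj a b := by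
  classical
  by_contra! hall
  have hclique : G.IsNClique (G.neighborSet v).ncard (G.neighborSet v).toFinite.toFinset := by
    refine ⟨?_, (Set.ncard_eq_toFinset_card _ _).symm⟩
    intro a ha b hb hab
    exact hall a b (by simpa using ha) (by simpa using hb) hab
  exact h _ (hclique.insert (a := v) (by simp))

section

variable [Finite V] (hdeg : ∀ v, (G.neighborSet v).ncard ≤ Nat.card α)
include hdeg

/-- Color `p` from its start up to before `x`, then the rest of it backwards from its end, then `x`
and `v`: the last vertex `v` sees the color of `a` twice. -/
theorem IsProperOn.exists_extend_path_of_chord (hc : IsProperOn G S c) {a b v w r x : V}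
    (ha : a ∈ S) (hb : b ∈ S) (hab : a ≠ b) (hcab : c a = c b) (hva : G.Adj v a)
    (hvb : G.Adj v b) (hvS : v ∉ S) {p : G.Walk w r} (hp : p.IsPath)
    (hpS : ∀ y ∈ p.support, y ∉ S) (hvp : v ∉ p.support) (hxp : x ∈ p.support)
    (hvx : G.Adj v x) : ∃ c' : V → α, IsProperOn G (insert v S ∪ {y | y ∈ p.support}) c' := by
  obtain ⟨L, R, rfl⟩ := Walk.mem_support_iff_exists_append.1 hxp
  simp only [Walk.mem_support_append_iff, not_or, or_imp, forall_and] at hvp hpS ⊢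
  obtain ⟨c₁, heq, hc₁⟩ := hc.exists_extend_path hdeg hp.of_append_left hpS.1
  have hRv : (R.reverse.concat hvx.symm).IsPath :=
    hp.of_append_right.reverse.concat (by simpa using hvp.2) _
  have hLR : ∀ y ∈ R.support, y ∈ L.support → y = x := by
    intro y hyR hyL
    have hnodup := hp.support_nodup
    rw [Walk.support_append, List.nodup_append'] at hnodup
    exact ((Walk.mem_support_iff ..).1 hyR).resolve_right fun hy => hnodup.2.2 hyL hy
  have hmem : ∀ y, y ∈ (R.reverse.concat hvx.symm).support ↔ y ∈ R.support ∨ y = v := by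
    simp [Walk.support_concat]
  obtain ⟨c₂, hc₂⟩ := hc₁.exists_extend_path_of_eq hdeg hRv (a := a) (b := b) (by
    intro y hy
    rcases (hmem y).1 hy with hyR | rfl
    · rintro (hyS | ⟨hyL, hyx⟩)
      exacts [hpS.2 y hyR hyS, hyx (hLR y hyR hyL)]
    · rintro (hyS | ⟨hyL, -⟩)
      exacts [hvS hyS, hvp.1 hyL])
    (Or.inl ha) (Or.inl hb) hab (by rw [heq ha, heq hb, hcab]) hva hvb
  refine ⟨c₂, hc₂.mono ?_⟩
  rintro y ((rfl | hyS) | hyL | hyR)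
  · exact Or.inr ((hmem y).2 (Or.inr rfl))
  · exact Or.inl (Or.inl hyS)
  · by_cases hyx : y = x
    · exact Or.inr ((hmem y).2 (Or.inl (hyx ▸ R.start_mem_support)))
    · exact Or.inl (Or.inr ⟨hyL, hyx⟩)
  · exact Or.inr ((hmem y).2 (Or.inl hyR))

theorem exists_isProperOn_of_chord {a b v r x : V} (hva : G.Adj v a) (hvb : G.Adj v b)
    (hab : a ≠ b) (hnab : ¬ G.Adj a b) {p : G.Walk b r} (hp : p.IsPath) (hap : a ∉ p.support)
    (hvp : v ∉ p.support) (hxp : x ∈ p.support) (hxb : x ≠ b) (hvx : G.Adj v x) :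
    ∃ c : V → α, IsProperOn G ({a, v} ∪ {y | y ∈ p.support}) c := by
  obtain ⟨color⟩ : Nonempty α :=
    (Nat.card_pos_iff.1 (((Set.ncard_pos).2 ⟨a, hva⟩).trans_le (hdeg v))).1
  have hc : IsProperOn G {a, b} fun _ : V => color := by
    rintro u (rfl | rfl) w (rfl | rfl) huw
    exacts [absurd huw G.irrefl, absurd huw hnab, absurd huw.symm hnab, absurd huw G.irrefl]
  cases p with
  | nil => exact absurd (by simpa using hxp) hxb
  | cons hbb' p =>
    rw [Walk.cons_isPath_iff] at hp
    simp only [Walk.support_cons, List.mem_cons, not_or] at hap hvp hxp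
    obtain ⟨c, hc⟩ := hc.exists_extend_path_of_chord hdeg (Or.inl rfl) (Or.inr rfl) hab rfl hva hvb
      (by simp [hva.ne, hvb.ne]) hp.1 (by
        rintro y hy (rfl | rfl)
        exacts [hap.2 hy, hp.2 hy]) hvp.2 (hxp.resolve_left hxb) hvx
    refine ⟨c, hc.mono ?_⟩
    rintro y ((rfl | rfl) | hy)
    · simp
    · simp
    · rw [Walk.support_cons, Set.mem_ofPred, List.mem_cons] at hy
      exact hy.imp (fun hyb => by simp [hyb]) id

/-- The cycle formed by `q` and the edge from `r` to `u` can be removed from `S`. -/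
theorem exists_isProperOn_of_cycle (ih : ∀ T ⊂ S, ∃ c : V → α, IsProperOn G T c) {u r : V}
    {q : G.Walk u r} (hq : q.IsPath) (hru : G.Adj r u) (hqS : {x | x ∈ q.support} ⊂ S)
    (hr : ∀ y, G.Adj r y → y ∈ q.support) : ∃ c : V → α, IsProperOn G S c := by
  have hrest : S \ {x | x ∈ q.support} ⊂ S :=
    Set.sdiff_ssubset_left_iff.2 ⟨u, hqS.subset q.start_mem_support, q.start_mem_support⟩
  obtain ⟨c₁, hc₁⟩ := ih _ hrest
  rw [← Set.sdiff_union_of_subset hqS.subset]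
  by_cases hedge : ∃ t ∈ q.support, ∃ w ∈ S \ {x | x ∈ q.support}, G.Adj t w
  · exact hc₁.exists_union_cycle hdeg hq hru (fun x hx hxS => hxS.2 hx)
      (fun w hw hrw => hw.2 (hr w hrw)) hedge
  · push Not at hedge
    obtain ⟨c₂, hc₂⟩ := ih _ hqS
    exact hc₁.exists_union hc₂ fun w hw t ht hwt => hedge t ht w hw hwt.symm

theorem exists_isProperOn_of_closed (hk : 3 ≤ Nat.card α) (hfree : G.CliqueFree (Nat.card α + 1))
    (ih : ∀ T ⊂ S, ∃ c : V → α, IsProperOn G T c) {v : V} (hv : v ∈ S)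
    (hvdeg : (G.neighborSet v).ncard = Nat.card α)
    (hclosed : ∀ x ∈ S, ∀ y, G.Adj x y → y ∈ S) : ∃ c : V → α, IsProperOn G S c := by
  classical
  obtain ⟨a, b, hva, hvb, hab, hnab⟩ := exists_adj_adj_not_adj_of_cliqueFree (hvdeg ▸ hfree)
  obtain ⟨r, p, hp, hpav, hr⟩ := exists_isPath_maximal (G := G) (A := {a, v}) (s := b) (by
    rintro (rfl | rfl)
    exacts [hab rfl, G.irrefl hvb])
  have hap : a ∉ p.support := fun h => hpav a h (Or.inl rfl)
  have hvp : v ∉ p.support := fun h => hpav v h (Or.inr rfl)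
  let P : G.Walk a r := .cons hva.symm (.cons hvb p)
  have hP : P.IsPath := (hp.cons hvp).cons (by simpa [hap] using hva.ne')
  have hPsupp : {y | y ∈ P.support} = {a, v} ∪ {y | y ∈ p.support} := by
    ext y
    simp [P, or_assoc]
  have hPS : {y | y ∈ P.support} ⊆ S := fun y hy => by
    by_contra hyS
    obtain ⟨d, -, hd₁, hd₂⟩ := (P.takeUntil y hy).exists_boundary_dart S (hclosed v hv a hva) hyS
    exact hd₂ (hclosed _ hd₁ _ d.adj)
  by_cases hPS' : {y | y ∈ P.support} = S
  · obtain ⟨x, hvx, hx⟩ : ∃ x ∈ G.neighborSet v, x ∉ ({a, b} : Set V) :=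
      Set.exists_mem_notMem_of_ncard_lt_ncard <|
        (Set.ncard_pair hab).trans_lt (lt_of_lt_of_le hk hvdeg.ge)
    simp only [Set.mem_insert_iff, Set.mem_singleton_iff, not_or] at hx
    have hxp : x ∈ p.support := by
      have hxS := hclosed v hv x hvx
      rw [← hPS', hPsupp] at hxS
      exact hxS.resolve_left (by simpa [hx.1] using hvx.ne')
    rw [← hPS', hPsupp]
    exact exists_isProperOn_of_chord hdeg hva hvb hab hnab hp hap hvp hxp hx.2 hvx
  · obtain ⟨u, q, hq, hru, hqP, hrq⟩ := exists_closing_suffix hP (fun y hry => hPsupp.ge (hr y hry))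
      (P.adj_penultimate Walk.not_nil_cons).symm
    exact exists_isProperOn_of_cycle hdeg ih hq hru
      (hPS.ssubset_of_ne hPS' |>.trans_le' hqP) hrq

theorem exists_isProperOn (hk : 3 ≤ Nat.card α) (hfree : G.CliqueFree (Nat.card α + 1))
    (S : Set V) : ∃ c : V → α, IsProperOn G S c := by
  have : Nonempty α := (Nat.card_pos_iff.1 (by lia)).1
  induction S using WellFoundedLT.induction with
  | ind S ih =>
    by_cases hclosed : ∀ x ∈ S, Nat.card α ≤ (G.neighborSet x).ncard ∧ ∀ y, G.Adj x y → y ∈ S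
    · rcases S.eq_empty_or_nonempty with rfl | ⟨v, hv⟩
      · exact ⟨fun _ => Classical.arbitrary α, fun _ hu => hu.elim⟩
      · exact exists_isProperOn_of_closed hdeg hk hfree ih hv ((hdeg v).antisymm (hclosed v hv).1)
          fun x hx => (hclosed x hx).2
    push Not at hclosed
    obtain ⟨v, hv, hout⟩ := hclosed
    obtain ⟨c, hc⟩ := ih _ (Set.sdiff_singleton_ssubset.2 hv)
    rw [← Set.insert_sdiff_self_of_mem hv]
    rcases le_or_gt (Nat.card α) (G.neighborSet v).ncard with hle | hlt
    · obtain ⟨u, hvu, huS⟩ := hout hle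
      obtain ⟨c', -, hc'⟩ := hc.exists_insert (by simp) (hdeg v) hvu fun hu => absurd hu.1 huS
      exact ⟨c', hc'⟩
    · obtain ⟨c', -, hc'⟩ := hc.exists_insert_of_ncard_image_lt (v := v) (by simp) <|
        calc (c '' (G.neighborSet v ∩ (S \ {v}))).ncard
            ≤ (G.neighborSet v ∩ (S \ {v})).ncard := Set.ncard_image_le
          _ ≤ (G.neighborSet v).ncard := Set.ncard_inter_le_ncard_left ..
          _ < Nat.card α := hlt
      exact ⟨c', hc'⟩

end

/-- Brooks' theorem. -/
theorem colorable_of_ncard_neighborSet_le [Finite V] {k : ℕ} (hk : 3 ≤ k)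
    (hdeg : ∀ v, (G.neighborSet v).ncard ≤ k) (hfree : G.CliqueFree (k + 1)) : G.Colorable k := by
  obtain ⟨c, hc⟩ := exists_isProperOn (α := Fin k) (by simpa using hdeg) (by simpa using hk)
    (by simpa using hfree) Set.univ
  exact ⟨.mk c fun {_ _} => hc trivial trivial⟩

end Brooks

section Thread

variable {V : Type*} {G : SimpleGraph V} {p q : ℕ → V} {m n : ℕ}

/-- A branch vertex: a vertex of degree 3. Threads start at branch vertices. -/
def IsBranch (G : SimpleGraph V) (v : V) : Prop :=
  (G.neighborSet v).ncard = 3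

/-- A thread with `m` inner vertices: the walk `p 0, p 1, …, p (m + 1)` leaves a branch vertex,
never turns back, and its inner vertices `p 1, …, p m` have degree 2. The last vertex is arbitrary,
and the values of `p` beyond `m + 1` are irrelevant. -/
structure IsThread (G : SimpleGraph V) (p : ℕ → V) (m : ℕ) : Prop where
  isBranch_zero : IsBranch G (p 0)
  adj : ∀ i ≤ m, G.Adj (p i) (p (i + 1))
  ncard_eq_two : ∀ i < m, (G.neighborSet (p (i + 1))).ncard = 2
  ne_add_two : ∀ i < m, p i ≠ p (i + 2)

namespace IsThread

theorem neighborSet_eq (hp : IsThread G p m) {i : ℕ} (hi : i < m) :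
    G.neighborSet (p (i + 1)) = {p i, p (i + 2)} := by
  have h2 := hp.ncard_eq_two i hi
  refine (Set.eq_of_subset_of_ncard_le ?_ ?_ (Set.finite_of_ncard_ne_zero (by lia))).symm
  · rintro _ (rfl | rfl)
    exacts [(hp.adj i hi.le).symm, hp.adj (i + 1) hi]
  · rw [h2, Set.ncard_pair (hp.ne_add_two i hi)]

theorem adj_iff (hp : IsThread G p m) {i : ℕ} (hi : i < m) {v : V} :
    G.Adj (p (i + 1)) v ↔ v = p i ∨ v = p (i + 2) := by
  rw [← mem_neighborSet, hp.neighborSet_eq hi, Set.mem_insert_iff, Set.mem_singleton_iff]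

theorem not_isBranch (hp : IsThread G p m) {i : ℕ} (hi : i < m) : ¬ IsBranch G (p (i + 1)) := by
  simp [IsBranch, hp.ncard_eq_two i hi]

theorem zero_ne_succ (hp : IsThread G p m) {i : ℕ} (hi : i < m) : p 0 ≠ p (i + 1) :=
  fun h => hp.not_isBranch hi (h ▸ hp.isBranch_zero)

theorem ne_of_lt (hp : IsThread G p m) {i j : ℕ} (hij : i < j) (hj : j ≤ m) : p i ≠ p j := by
  induction j generalizing i with
  | zero => exact absurd hij i.not_lt_zero
  | succ j ih =>
    rcases i with _ | i
    · exact hp.zero_ne_succ hj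
    intro h
    have hadj : G.Adj (p (i + 1)) (p j) := h ▸ (hp.adj j (by lia)).symm
    rcases (hp.adj_iff (by lia)).1 hadj with h' | h'
    · exact ih (i := i) (by lia) (by lia) h'.symm
    rcases (by lia : i + 2 < j ∨ i + 2 = j ∨ i + 1 = j) with hlt | rfl | rfl
    · exact ih hlt (by lia) h'.symm
    · exact hp.ne_add_two (i + 1) (by lia) h
    · exact hadj.ne rfl

theorem injOn (hp : IsThread G p m) : Set.InjOn p (Set.Iic m) := by
  intro i hi j hj h
  by_contra hij
  rcases lt_or_gt_of_ne hij with hlt | hlt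
  exacts [hp.ne_of_lt hlt hj h, hp.ne_of_lt hlt hi h.symm]

theorem lt_card [Finite V] (hp : IsThread G p m) : m < Nat.card V := by
  have hle := Set.ncard_le_card (p '' Set.Iic m)
  rw [hp.injOn.ncard_image, Set.ncard_eq_toFinset_card', Set.toFinset_Iic,
    Nat.card_Iic] at hle
  lia

theorem ne_last (hp : IsThread G p m) (hend : (G.neighborSet (p (m + 1))).ncard ≠ 2)
    (h0 : p 0 ≠ p (m + 1)) {i : ℕ} (hi : i ≤ m) : p i ≠ p (m + 1) := by
  rcases i with _ | i
  · exact h0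
  · exact fun h => hend (h ▸ hp.ncard_eq_two i hi)

theorem injOn_succ (hp : IsThread G p m) (hend : (G.neighborSet (p (m + 1))).ncard ≠ 2)
    (h0 : p 0 ≠ p (m + 1)) : Set.InjOn p (Set.Iic (m + 1)) := by
  intro i hi j hj h
  rcases Nat.le_succ_iff.1 hi with hi | rfl <;> rcases Nat.le_succ_iff.1 hj with hj | rfl
  · exact hp.injOn hi hj h
  · exact absurd h (hp.ne_last hend h0 hi)
  · exact absurd h.symm (hp.ne_last hend h0 hj)
  · rfl

theorem reverse (hp : IsThread G p m) (hend : IsBranch G (p (m + 1))) :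
    IsThread G (fun i => p (m + 1 - i)) m where
  isBranch_zero := hend
  adj i hi := by
    have := (hp.adj (m - i) (by lia)).symm
    rwa [show m - i + 1 = m + 1 - i by lia, show m - i = m + 1 - (i + 1) by lia] at this
  ncard_eq_two i hi := by
    have := hp.ncard_eq_two (m - 1 - i) (by lia)
    rwa [show m - 1 - i + 1 = m + 1 - (i + 1) by lia] at this
  ne_add_two i hi := by
    have := (hp.ne_add_two (m - 1 - i) (by lia)).symm
    rwa [show m - 1 - i + 2 = m + 1 - i by lia, show m - 1 - i = m + 1 - (i + 2) by lia] at this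

theorem eq_of_le (hp : IsThread G p m) (hq : IsThread G q n) (h0 : p 0 = q 0) (h1 : p 1 = q 1)
    {i : ℕ} (him : i ≤ m) (hin : i ≤ n) : p i = q i ∧ p (i + 1) = q (i + 1) := by
  induction i with
  | zero => exact ⟨h0, h1⟩
  | succ i ih =>
    obtain ⟨hi, hi'⟩ := ih (by lia) (by lia)
    have hadj : G.Adj (p (i + 1)) (q (i + 2)) := hi' ▸ hq.adj (i + 1) hin
    refine ⟨hi', (((hp.adj_iff him).1 hadj).resolve_left ?_).symm⟩
    exact hi ▸ (hq.ne_add_two i hin).symm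

theorem last_eq_of_le (hp : IsThread G p m) (hq : IsThread G q n) (h0 : p 0 = q 0)
    (h1 : p 1 = q 1) (hend : (G.neighborSet (p (m + 1))).ncard ≠ 2) (hmn : m ≤ n) :
    p (m + 1) = q (n + 1) := by
  have heq := (hp.eq_of_le hq h0 h1 le_rfl hmn).2
  rcases hmn.eq_or_lt with rfl | hlt
  · exact heq
  · exact absurd (heq ▸ hq.ncard_eq_two m hlt) hend

theorem last_eq (hp : IsThread G p m) (hq : IsThread G q n) (h0 : p 0 = q 0) (h1 : p 1 = q 1)
    (hpend : (G.neighborSet (p (m + 1))).ncard ≠ 2)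
    (hqend : (G.neighborSet (q (n + 1))).ncard ≠ 2) : p (m + 1) = q (n + 1) := by
  rcases le_total m n with hmn | hnm
  · exact hp.last_eq_of_le hq h0 h1 hpend hmn
  · exact (hq.last_eq_of_le hp h0.symm h1.symm hqend hnm).symm

theorem exists_snoc (hp : IsThread G p m) (hend : (G.neighborSet (p (m + 1))).ncard = 2) :
    ∃ q, IsThread G q (m + 1) ∧ q 0 = p 0 ∧ q 1 = p 1 := by
  obtain ⟨x, hx, hxm⟩ : ∃ x, G.Adj (p (m + 1)) x ∧ x ≠ p m :=
    Set.exists_ne_of_one_lt_ncard (by lia : 1 < (G.neighborSet (p (m + 1))).ncard) (p m)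
  have hq : ∀ i ≤ m + 1, Function.update p (m + 2) x i = p i :=
    fun i hi => Function.update_of_ne (by lia) ..
  refine ⟨Function.update p (m + 2) x, ⟨?_, ?_, ?_, ?_⟩, hq 0 (by lia), hq 1 (by lia)⟩
  · rw [hq 0 (by lia)]
    exact hp.isBranch_zero
  · intro i hi
    rcases hi.eq_or_lt with rfl | hi
    · rw [hq _ le_rfl, Function.update_self]
      exact hx
    · rw [hq _ (by lia), hq _ (by lia)]
      exact hp.adj i (by lia)
  · intro i hi
    rw [hq _ (by lia)]
    rcases (Nat.lt_succ_iff.1 hi).eq_or_lt with rfl | hi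
    exacts [hend, hp.ncard_eq_two i hi]
  · intro i hi
    rw [hq i (by lia)]
    rcases (Nat.lt_succ_iff.1 hi).eq_or_lt with rfl | hi
    · rw [Function.update_self]
      exact hxm.symm
    · rw [hq _ (by lia)]
      exact hp.ne_add_two i hi

end IsThread

theorem isThread_zero {v w : V} (hv : IsBranch G v) (hvw : G.Adj v w) :
    IsThread G (fun i => if i = 0 then v else w) 0 :=
  ⟨hv, by simpa using hvw, by simp, by simp⟩

theorem exists_isThread [Finite V] {v w : V} (hv : IsBranch G v) (hvw : G.Adj v w) :
    ∃ p m, IsThread G p m ∧ p 0 = v ∧ p 1 = w ∧ (G.neighborSet (p (m + 1))).ncard ≠ 2 := by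
  by_contra! hend
  have hlong : ∀ m, ∃ p, IsThread G p m ∧ p 0 = v ∧ p 1 = w := by
    intro m
    induction m with
    | zero => exact ⟨_, isThread_zero hv hvw, rfl, rfl⟩
    | succ m ih =>
      obtain ⟨p, hp, h0, h1⟩ := ih
      obtain ⟨q, hq, hq0, hq1⟩ := hp.exists_snoc (hend p m hp h0 h1)
      exact ⟨q, hq, hq0.trans h0, hq1.trans h1⟩
  obtain ⟨p, hp, -⟩ := hlong (Nat.card V)
  exact hp.lt_card.false

theorem IsThread.hasAPath (hp : IsThread G p m) (hend : IsBranch G (p (m + 1)))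
    (h0 : p 0 ≠ p (m + 1)) : HasAPath G (m + 2) := by
  have hinj := hp.injOn_succ (by rw [hend]; decide) h0
  refine ⟨p, fun a b ha hb => hinj (Nat.lt_succ_iff.1 ha) (Nat.lt_succ_iff.1 hb),
    fun a ha => hp.adj a (by lia), ?_, hp.isBranch_zero, hend⟩
  intro a h0a ha
  obtain ⟨a, rfl⟩ := Nat.exists_eq_add_one.2 h0a
  exact hp.ncard_eq_two a (by lia)

theorem IsThread.mod_three_ne_two (hp : IsThread G p m) (hend : IsBranch G (p (m + 1)))
    (h0 : p 0 ≠ p (m + 1)) (hA : ∀ j : ℕ, 0 < j → ¬ HasAPath G (3 * j + 1)) : m % 3 ≠ 2 := by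
  intro hm
  refine hA (m / 3 + 1) (by lia) ?_
  rw [show 3 * (m / 3 + 1) + 1 = m + 2 by lia]
  exact hp.hasAPath hend h0

theorem IsThread.eq_two_of_adj (hp : IsThread G p m) (hm : 2 ≤ m) {y : V} (h0 : G.Adj (p 0) y)
    (h1 : G.Adj (p 1) y) : m = 2 ∧ p 0 = p 3 := by
  obtain rfl : y = p 2 := ((hp.adj_iff (i := 0) (by lia)).1 h1).resolve_left h0.ne'
  have h03 : p 0 = p 3 :=
    ((hp.adj_iff (i := 1) hm).1 h0.symm).resolve_left (hp.zero_ne_succ (i := 0) (by lia))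
  refine ⟨?_, h03⟩
  by_contra hm2
  exact hp.zero_ne_succ (i := 2) (by lia) h03

theorem ClawFree.exists_adj (hG : ClawFree G) {v : V} (hv : IsBranch G v) :
    ∃ x y, G.Adj v x ∧ G.Adj v y ∧ G.Adj x y := by
  obtain ⟨a, b, c, hab, hac, hbc, hN⟩ := Set.ncard_eq_three.1 hv
  have hva : ∀ w ∈ ({a, b, c} : Set V), G.Adj v w := fun w hw => by rwa [← hN] at hw
  simp only [Set.mem_insert_iff, Set.mem_singleton_iff, forall_eq_or_imp, forall_eq] at hva
  by_contra! hno
  exact hG ⟨v, a, b, c, hab, hac, hbc, hva.1, hva.2.1, hva.2.2, hno a b hva.1 hva.2.1,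
    hno a c hva.1 hva.2.2, hno b c hva.2.1 hva.2.2⟩

/-- Two of the three neighbors of `p 0` are adjacent, and one of these two lies on the loop. -/
theorem IsThread.eq_two_of_loop (hp : IsThread G p m) (hG : ClawFree G) (hloop : p 0 = p (m + 1)) :
    m = 2 := by
  have hm : 2 ≤ m := by
    by_contra hm
    interval_cases m
    · exact (hp.adj 0 le_rfl).ne hloop
    · exact hp.ne_add_two 0 one_pos hloop
  obtain ⟨x, y, hx, hy, hxy⟩ := hG.exists_adj hp.isBranch_zero
  have hlast : G.Adj (p 0) (p m) := hloop ▸ (hp.adj m le_rfl).symm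
  have hmeet : ¬ Disjoint ({p 1, p m} : Set V) {x, y} := by
    intro hdisj
    have hsub : {p 1, p m} ∪ {x, y} ⊆ G.neighborSet (p 0) := by
      rintro _ ((rfl | rfl) | (rfl | rfl))
      exacts [hp.adj 0 m.zero_le, hlast, hx, hy]
    have hle := Set.ncard_le_ncard hsub (Set.finite_of_ncard_ne_zero (hp.isBranch_zero ▸ by decide))
    rw [Set.ncard_union_eq hdisj, Set.ncard_pair (hp.ne_of_lt hm le_rfl), Set.ncard_pair hxy.ne,
      hp.isBranch_zero] at hle
    lia
  have hrev := hp.reverse (hloop ▸ hp.isBranch_zero)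
  obtain ⟨z, hz, hz'⟩ := Set.not_disjoint_iff.1 hmeet
  obtain ⟨w, h0w, hzw⟩ : ∃ w, G.Adj (p 0) w ∧ G.Adj z w := by
    rcases hz' with rfl | rfl
    exacts [⟨y, hy, hxy⟩, ⟨x, hx, hxy.symm⟩]
  rcases hz with rfl | rfl
  · exact (hp.eq_two_of_adj hm h0w hzw).1
  · exact (hrev.eq_two_of_adj hm (hloop ▸ h0w) hzw).1

/-- The graph on the branch vertices obtained by contracting every thread to an edge; the vertices
that are not branch vertices become isolated, and loops and parallel edges are lost. -/
def threadGraph (G : SimpleGraph V) : SimpleGraph V where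
  Adj u v := u ≠ v ∧ ∃ p m, IsThread G p m ∧ p 0 = u ∧ p (m + 1) = v ∧ IsBranch G v
  symm := ⟨by
    rintro u v ⟨huv, p, m, hp, rfl, rfl, hv⟩
    exact ⟨huv.symm, _, m, hp.reverse hv, by simp, by simp, hp.isBranch_zero⟩⟩
  loopless := ⟨fun _ h => h.1 rfl⟩

theorem isBranch_of_threadGraph_adj {u v : V} (h : (threadGraph G).Adj u v) : IsBranch G u := by
  obtain ⟨-, p, m, hp, rfl, -⟩ := h
  exact hp.isBranch_zero

/-- A thread is determined by its first two vertices, so distinct neighbors in the thread graph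
are reached through distinct neighbors in `G`. -/
theorem exists_injOn_threadGraph_neighborSet (G : SimpleGraph V) (v : V) :
    ∃ f : V → V, Set.MapsTo f ((threadGraph G).neighborSet v) (G.neighborSet v) ∧
      Set.InjOn f ((threadGraph G).neighborSet v) ∧
      ∀ w, (threadGraph G).Adj v w →
        ∃ p m, IsThread G p m ∧ p 0 = v ∧ p 1 = f w ∧ p (m + 1) = w := by
  have hfirst : ∀ w, ∃ x, (threadGraph G).Adj v w →
      ∃ p m, IsThread G p m ∧ p 0 = v ∧ p 1 = x ∧ p (m + 1) = w := by
    intro w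
    by_cases hw : (threadGraph G).Adj v w
    · obtain ⟨-, p, m, hp, h0, hend, -⟩ := hw
      exact ⟨p 1, fun _ => ⟨p, m, hp, h0, rfl, hend⟩⟩
    · exact ⟨v, fun h => absurd h hw⟩
  choose f hf using hfirst
  refine ⟨f, fun w hw => ?_, fun w hw w' hw' h => ?_, hf⟩
  · obtain ⟨p, m, hp, h0, h1, -⟩ := hf w hw
    rw [← h0, ← h1]
    exact hp.adj 0 m.zero_le
  · obtain ⟨p, m, hp, h0, h1, rfl⟩ := hf w hw
    obtain ⟨q, n, hq, h0', h1', rfl⟩ := hf w' hw'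
    have hbranch {x : V} (hx : (threadGraph G).Adj v x) : (G.neighborSet x).ncard ≠ 2 := by
      rw [isBranch_of_threadGraph_adj hx.symm]
      decide
    exact hp.last_eq hq (h0.trans h0'.symm) (by rw [h1, h1', h]) (hbranch hw) (hbranch hw')

theorem ncard_threadGraph_neighborSet_le [Finite V] (G : SimpleGraph V) (v : V) :
    ((threadGraph G).neighborSet v).ncard ≤ (G.neighborSet v).ncard := by
  obtain ⟨f, hf, hinj, -⟩ := exists_injOn_threadGraph_neighborSet G v
  exact Set.ncard_le_ncard_of_injOn f hf hinj

theorem threadGraph_adj_of_triangle [Finite V] {v x y : V}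
    (hle : (G.neighborSet v).ncard ≤ ((threadGraph G).neighborSet v).ncard) (hvx : G.Adj v x)
    (hvy : G.Adj v y) (hxy : G.Adj x y) : (threadGraph G).Adj v x := by
  obtain ⟨f, hf, hinj, hthread⟩ := exists_injOn_threadGraph_neighborSet G v
  have himage : f '' (threadGraph G).neighborSet v = G.neighborSet v :=
    Set.eq_of_subset_of_ncard_le hf.image_subset (by rwa [hinj.ncard_image])
  obtain ⟨w, hw, rfl⟩ := himage.ge hvx
  obtain ⟨p, m, hp, rfl, h1, rfl⟩ := hthread w hw
  rw [← h1] at hxy ⊢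
  rcases (by lia : m = 0 ∨ m = 1 ∨ 2 ≤ m) with rfl | rfl | hm
  · exact hw
  · obtain rfl : y = p 2 := ((hp.adj_iff one_pos).1 hxy).resolve_left hvy.ne'
    obtain ⟨w', hw', hfw'⟩ := himage.ge hvy
    obtain ⟨q, n, hq, -, hq1, rfl⟩ := hthread w' hw'
    replace hq1 := hq1.trans hfw'
    rcases n with _ | n
    · rw [zero_add, hq1] at hfw'
      exact absurd (h1.trans hfw') hxy.ne
    · refine absurd ?_ (hq.not_isBranch n.succ_pos)
      rw [hq1]
      exact isBranch_of_threadGraph_adj ((threadGraph G).adj_symm hw)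
  · obtain ⟨rfl, h03⟩ := hp.eq_two_of_adj hm hvy hxy
    exact absurd h03 (ne_of_adj (threadGraph G) hw)

end Thread

section K4sub

variable {V W : Type*} {G : SimpleGraph V} {H : SimpleGraph W} {p : ℕ → V} {m : ℕ}

/-- The degree condition makes the image of `f` closed under adjacency, hence everything. -/
theorem nonempty_iso_of_injective_hom [Finite V] [Nonempty W] (hG : G.Connected) (f : H →g G)
    (hf : Function.Injective f)
    (hdeg : ∀ x, (G.neighborSet (f x)).ncard ≤ (H.neighborSet x).ncard) : Nonempty (H ≃g G) := by
  have himage : ∀ x, f '' H.neighborSet x = G.neighborSet (f x) := by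
    refine fun x => Set.eq_of_subset_of_ncard_le ?_ ?_
    · rintro _ ⟨y, hy, rfl⟩
      exact f.map_adj hy
    · exact (hdeg x).trans_eq (Set.ncard_image_of_injective _ hf).symm
  have hsurj : Function.Surjective f := by
    by_contra hns
    obtain ⟨v, hv⟩ := not_forall.1 hns
    obtain ⟨w⟩ := hG.preconnected (f (Classical.arbitrary W)) v
    obtain ⟨d, -, ⟨x, hx⟩, hd⟩ := w.exists_boundary_dart (Set.range f) ⟨_, rfl⟩ hv
    have hadj : d.snd ∈ G.neighborSet (f x) := hx ▸ d.adj
    rw [← himage] at hadj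
    exact hd (Set.image_subset_range _ _ hadj)
  refine ⟨⟨Equiv.ofBijective f ⟨hf, hsurj⟩, fun {x y} => ⟨fun hxy => ?_, f.map_adj⟩⟩⟩
  have hmem : f y ∈ G.neighborSet (f x) := hxy
  rwa [← himage, hf.mem_set_image] at hmem

namespace K4sub

@[simp]
theorem adj_inl_inl {i j : Fin (m + 2)} :
    (K4sub m).Adj (.inl i) (.inl j) ↔ (i : ℕ) + 1 = j ∨ (j : ℕ) + 1 = i := by
  simp only [K4sub, fromRel_adj, ne_eq, Sum.inl.injEq, Fin.ext_iff]
  lia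

@[simp]
theorem adj_inl_inr {i : Fin (m + 2)} {j : Fin 2} :
    (K4sub m).Adj (.inl i) (.inr j) ↔ (i : ℕ) = 0 ∨ (i : ℕ) = m + 1 := by
  simp [K4sub]

@[simp]
theorem adj_inr_inl {i : Fin (m + 2)} {j : Fin 2} :
    (K4sub m).Adj (.inr j) (.inl i) ↔ (i : ℕ) = 0 ∨ (i : ℕ) = m + 1 := by
  rw [adj_comm, adj_inl_inr]

@[simp]
theorem adj_inr_inr {i j : Fin 2} : (K4sub m).Adj (.inr i) (.inr j) ↔ i ≠ j := by
  simp [K4sub]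

theorem isBranch_inl {i : Fin (m + 2)} (hi : (i : ℕ) = 0 ∨ (i : ℕ) = m + 1) :
    IsBranch (K4sub m) (.inl i) := by
  refine Set.ncard_eq_three.2 ⟨.inl ⟨if (i : ℕ) = 0 then 1 else m, by split <;> lia⟩, .inr 0,
    .inr 1, Sum.inl_ne_inr, Sum.inl_ne_inr, by simp, ?_⟩
  ext (j | j)
  · simp only [mem_neighborSet, adj_inl_inl, Set.mem_insert_iff, Set.mem_singleton_iff,
      Sum.inl.injEq, Fin.ext_iff, reduceCtorEq, or_false]
    grind
  · simp only [mem_neighborSet, adj_inl_inr, Set.mem_insert_iff, Set.mem_singleton_iff,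
      Sum.inr.injEq, reduceCtorEq, false_or]
    lia

theorem isBranch_inr (j : Fin 2) : IsBranch (K4sub m) (.inr j) := by
  refine Set.ncard_eq_three.2 ⟨.inl 0, .inl (Fin.last _), .inr j.rev, by simp [Fin.ext_iff],
    Sum.inl_ne_inr, Sum.inl_ne_inr, ?_⟩
  ext (i | i)
  · simp only [mem_neighborSet, adj_inr_inl, Set.mem_insert_iff, Set.mem_singleton_iff,
      Sum.inl.injEq, Fin.ext_iff, Fin.val_zero, Fin.val_last, reduceCtorEq, or_false]
  · simp only [mem_neighborSet, adj_inr_inr, Set.mem_insert_iff, Set.mem_singleton_iff,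
      Sum.inr.injEq, Fin.ext_iff, Fin.val_rev, reduceCtorEq, false_or]
    lia

theorem ncard_neighborSet_inl {i : Fin (m + 2)} (h0 : 0 < (i : ℕ)) (hm : (i : ℕ) < m + 1) :
    ((K4sub m).neighborSet (.inl i)).ncard = 2 := by
  refine Set.ncard_eq_two.2 ⟨.inl ⟨i - 1, by lia⟩, .inl ⟨i + 1, by lia⟩, by simp, ?_⟩
  ext (j | j)
  · simp only [mem_neighborSet, adj_inl_inl, Set.mem_insert_iff, Set.mem_singleton_iff,
      Sum.inl.injEq, Fin.ext_iff]
    lia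
  · simp only [mem_neighborSet, adj_inl_inr, Set.mem_insert_iff, Set.mem_singleton_iff,
      reduceCtorEq, or_false]
    lia

theorem isThread (m : ℕ) :
    IsThread (K4sub m) (fun i => .inl (Fin.ofNat (m + 2) i)) m where
  isBranch_zero := isBranch_inl (by simp)
  adj i hi := by
    rw [adj_inl_inl]
    simp [Nat.mod_eq_of_lt, show i < m + 2 by lia, show i + 1 < m + 2 by lia]
  ncard_eq_two i hi := ncard_neighborSet_inl
    (by simp [Nat.mod_eq_of_lt, show i + 1 < m + 2 by lia])
    (by simpa [Nat.mod_eq_of_lt, show i + 1 < m + 2 by lia])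
  ne_add_two i hi := by
    simp [Fin.ext_iff, Nat.mod_eq_of_lt, show i < m + 2 by lia, show i + 2 < m + 2 by lia]

theorem exists_hom_eq_sumElim (hp : ∀ i ≤ m, G.Adj (p i) (p (i + 1))) {t : Fin 2 → V}
    (ht : G.Adj (t 0) (t 1)) (h0t : ∀ j, G.Adj (p 0) (t j)) (hmt : ∀ j, G.Adj (p (m + 1)) (t j)) :
    ∃ f : K4sub m →g G, ⇑f = Sum.elim (fun i : Fin (m + 2) => p i) t := by
  refine ⟨⟨Sum.elim (fun i => p i) t, ?_⟩, rfl⟩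
  rintro (i | i) (j | j) hij
  · rw [adj_inl_inl] at hij
    simp only [Sum.elim_inl]
    rcases hij with hij | hij
    · exact hij ▸ hp i (by lia)
    · exact hij ▸ (hp j (by lia)).symm
  · rcases adj_inl_inr.1 hij with h | h
    · simpa [h] using h0t j
    · simpa [h] using hmt j
  · rcases adj_inr_inl.1 hij with h | h
    · simpa [h] using (h0t i).symm
    · simpa [h] using (hmt i).symm
  · have hcases : ∀ i j : Fin 2, i ≠ j → i = 0 ∧ j = 1 ∨ i = 1 ∧ j = 0 := by decide
    rcases hcases i j (adj_inr_inr.1 hij) with ⟨rfl, rfl⟩ | ⟨rfl, rfl⟩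
    exacts [ht, ht.symm]

end K4sub

theorem IsThread.nonempty_iso_K4sub [Finite V] (hG : G.Connected) (hp : IsThread G p m)
    (hend : IsBranch G (p (m + 1))) (h0 : p 0 ≠ p (m + 1)) {t : Fin 2 → V}
    (ht : ∀ j, IsBranch G (t j)) (ht01 : G.Adj (t 0) (t 1)) (h0t : ∀ j, G.Adj (p 0) (t j))
    (hmt : ∀ j, G.Adj (p (m + 1)) (t j)) : Nonempty (G ≃g K4sub m) := by
  have hinj := hp.injOn_succ (by rw [hend]; decide) h0
  have hne : ∀ (i : Fin (m + 2)) j, p i ≠ t j := by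
    rintro ⟨_ | i, hi⟩ j
    · exact (h0t j).ne
    · rcases (by lia : i = m ∨ i < m) with rfl | hi
      · exact (hmt j).ne
      · exact fun h => hp.not_isBranch hi (h ▸ ht j)
  obtain ⟨f, hf_eq⟩ := K4sub.exists_hom_eq_sumElim hp.adj ht01 h0t hmt
  have hf : Function.Injective f := by
    rw [hf_eq]
    refine Function.Injective.sumElim (fun i j h => Fin.ext (hinj i.is_le j.is_le h))
      (fun i j h => ?_) hne
    by_contra hij
    simpa [hf_eq, h] using f.map_adj (K4sub.adj_inr_inr.2 hij)
  refine (nonempty_iso_of_injective_hom hG f hf ?_).map Iso.symm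
  rintro (i | j)
  · rcases (by lia : ((i : ℕ) = 0 ∨ (i : ℕ) = m + 1) ∨ 0 < (i : ℕ) ∧ (i : ℕ) < m + 1) with hi | hi
    · rw [K4sub.isBranch_inl hi, hf_eq]
      rcases hi with hi | hi
      · simpa [hi] using hp.isBranch_zero.le
      · simpa [hi] using hend.le
    · obtain ⟨k, hk⟩ := Nat.exists_eq_add_one.2 hi.1
      rw [K4sub.ncard_neighborSet_inl hi.1 hi.2, hf_eq]
      simpa [hk] using (hp.ncard_eq_two k (by lia)).le
  · rw [K4sub.isBranch_inr, hf_eq]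
    exact (ht j).le

theorem exists_triangle_of_isNClique_four [Finite V] (hG : ClawFree G) {K : Finset V}
    (hK : (threadGraph G).IsNClique 4 K) {v : V} (hv : v ∈ K) :
    ∃ Δ ⊆ K, v ∈ Δ ∧ G.IsNClique 3 Δ := by
  classical
  have hKN : ((K.erase v : Finset V) : Set V) ⊆ (threadGraph G).neighborSet v := by
    intro w hw
    rw [Finset.mem_coe, Finset.mem_erase] at hw
    exact hK.isClique hv hw.2 hw.1.symm
  have hcard : (K.erase v).card = 3 := by rw [Finset.card_erase_of_mem hv, hK.card_eq]
  obtain ⟨w, hw⟩ := Finset.card_pos.1 (by lia : 0 < (K.erase v).card)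
  have hbranch : IsBranch G v := isBranch_of_threadGraph_adj (hKN hw)
  have hNK : ((K.erase v : Finset V) : Set V) = (threadGraph G).neighborSet v := by
    refine Set.eq_of_subset_of_ncard_le hKN ?_
    rw [Set.ncard_coe_finset, hcard, ← hbranch]
    exact ncard_threadGraph_neighborSet_le G v
  have hle : (G.neighborSet v).ncard ≤ ((threadGraph G).neighborSet v).ncard := by
    rw [← hNK, Set.ncard_coe_finset, hcard, hbranch]
  obtain ⟨x, y, hvx, hvy, hxy⟩ := hG.exists_adj hbranch
  have hxK := hNK.ge (threadGraph_adj_of_triangle hle hvx hvy hxy)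
  have hyK := hNK.ge (threadGraph_adj_of_triangle hle hvy hvx hxy.symm)
  refine ⟨{v, x, y}, ?_, by simp, is3Clique_triple_iff.2 ⟨hvx, hvy, hxy⟩⟩
  simpa [Finset.insert_subset_iff, hv] using
    ⟨Finset.mem_of_mem_erase hxK, Finset.mem_of_mem_erase hyK⟩

/-- Every vertex of `K` lies in a triangle of `G` inside `K`; two such triangles share an edge, and
`u`, `w` are the vertices of `K` off this edge. -/
theorem exists_diamond_of_isNClique_four [Finite V] (hG : ClawFree G) {K : Finset V}
    (hK : (threadGraph G).IsNClique 4 K) :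
    ∃ u ∈ K, ∃ w ∈ K, u ≠ w ∧ ∃ x ∈ K, ∃ y ∈ K, G.Adj x y ∧ G.Adj u x ∧ G.Adj u y ∧
      G.Adj w x ∧ G.Adj w y := by
  classical
  obtain ⟨v, hv⟩ := Finset.card_pos.1 (by rw [hK.card_eq]; decide : 0 < K.card)
  obtain ⟨Δ, hΔK, -, hΔ⟩ := exists_triangle_of_isNClique_four hG hK hv
  obtain ⟨w, hwK, hwΔ⟩ := Finset.exists_mem_notMem_of_card_lt_card
    (by rw [hK.card_eq, hΔ.card_eq]; decide : Δ.card < K.card)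
  obtain ⟨Δ', hΔ'K, hwΔ', hΔ'⟩ := exists_triangle_of_isNClique_four hG hK hwK
  have hKeq : insert w Δ = K := Finset.eq_of_subset_of_card_le (Finset.insert_subset hwK hΔK)
    (by rw [Finset.card_insert_of_notMem hwΔ, hΔ.card_eq, hK.card_eq])
  obtain ⟨x, y, hxy, hΔ'w⟩ := Finset.card_eq_two.1
    (by rw [Finset.card_erase_of_mem hwΔ', hΔ'.card_eq] : (Δ'.erase w).card = 2)
  obtain ⟨u, huΔ, hu⟩ := Finset.exists_mem_notMem_of_card_lt_card
    (by rw [hΔ'w, Finset.card_pair hxy, hΔ.card_eq]; decide : (Δ'.erase w).card < Δ.card)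
  have huw : u ≠ w := ne_of_mem_of_not_mem huΔ hwΔ
  have hcommon : ∀ z ∈ Δ'.erase w, z ∈ Δ' ∧ z ∈ K ∧ G.Adj u z ∧ G.Adj w z := by
    intro z hz
    obtain ⟨hzw, hzΔ'⟩ := Finset.mem_erase.1 hz
    have hzΔ : z ∈ Δ := Finset.mem_of_mem_insert_of_ne (hKeq.ge (hΔ'K hzΔ')) hzw
    exact ⟨hzΔ', hΔ'K hzΔ', hΔ.isClique huΔ hzΔ (ne_of_mem_of_not_mem hz hu).symm,
      hΔ'.isClique hwΔ' hzΔ' hzw.symm⟩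
  obtain ⟨hxΔ', hxK, hux, hwx⟩ := hcommon x (by simp [hΔ'w])
  obtain ⟨hyΔ', hyK, huy, hwy⟩ := hcommon y (by simp [hΔ'w])
  exact ⟨u, hΔK huΔ, w, hwK, huw, x, hxK, y, hyK, hΔ'.isClique hxΔ' hyΔ' hxy, hux, huy, hwx, hwy⟩

theorem cliqueFree_four_threadGraph [Finite V] (hconn : G.Connected) (hG : ClawFree G)
    (hA : ∀ j : ℕ, 0 < j → ¬ HasAPath G (3 * j + 1))
    (hK4 : ¬ ∃ m, (m % 3 = 0 ∨ m % 3 = 1) ∧ Nonempty (G ≃g K4sub m)) :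
    (threadGraph G).CliqueFree 4 := by
  intro K hK
  obtain ⟨u, hu, w, hw, huw, x, hx, y, hy, hxy, hux, huy, hwx, hwy⟩ :=
    exists_diamond_of_isNClique_four hG hK
  have hbranch : ∀ z ∈ K, G.Adj u z → IsBranch G z := fun z hz huz =>
    isBranch_of_threadGraph_adj (hK.isClique hz hu huz.ne')
  obtain ⟨hne, p, m, hp, rfl, rfl, hend⟩ := hK.isClique hu hw huw
  have hm := hp.mod_three_ne_two hend hne hA
  refine hK4 ⟨m, by lia, hp.nonempty_iso_K4sub hconn hend hne (t := ![x, y]) ?_ hxy ?_ ?_⟩ <;>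
    simp only [Fin.forall_fin_two]
  exacts [⟨hbranch x hx hux, hbranch y hy huy⟩, ⟨hux, huy⟩, ⟨hwx, hwy⟩]

end K4sub

section Extension

variable {V : Type*} {G : SimpleGraph V} {c₀ c : V → ZMod 3} {S : Set V} {p : ℕ → V} {m : ℕ}

/-- `c` extends the coloring `c₀` of the branch vertices to the set `S`, in such a way that the
closed neighborhood of any other vertex of `S` is contained in `S` and has no repeated color. The
values of `c` outside `S` are irrelevant. -/
structure IsPartialColoring (G : SimpleGraph V) (c₀ : V → ZMod 3) (S : Set V) (c : V → ZMod 3) :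
    Prop where
  mem_of_isBranch : ∀ v, IsBranch G v → v ∈ S
  eq_of_isBranch : ∀ v, IsBranch G v → c v = c₀ v
  neighborSet_subset : ∀ v ∈ S, ¬ IsBranch G v → G.neighborSet v ⊆ S
  injOn : ∀ v ∈ S, ¬ IsBranch G v → Set.InjOn c (insert v (G.neighborSet v))

theorem isPartialColoring_setOf_isBranch (G : SimpleGraph V) (c₀ : V → ZMod 3) :
    IsPartialColoring G c₀ {v | IsBranch G v} c₀ where
  mem_of_isBranch _ hv := hv
  eq_of_isBranch _ _ := rfl
  neighborSet_subset _ hv hv' := absurd hv hv'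
  injOn _ hv hv' := absurd hv hv'

theorem IsPartialColoring.isBranch_of_mem (hc : IsPartialColoring G c₀ S c) (hp : IsThread G p m)
    (h1 : p 1 ∉ S) {i : ℕ} (hi : i ≤ m + 1) (hiS : p i ∈ S) : IsBranch G (p i) := by
  induction i with
  | zero => exact hp.isBranch_zero
  | succ i ih =>
    rcases i with _ | i
    · exact absurd hiS h1
    by_contra hbranch
    have hmem := hc.neighborSet_subset _ hiS hbranch (hp.adj (i + 1) (by lia)).symm
    exact hp.not_isBranch (by lia) (ih (by lia) hmem)

theorem IsThread.natCast_eq_of_eq (hp : IsThread G p m) (hG : ClawFree G)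
    (hend : (G.neighborSet (p (m + 1))).ncard ≠ 2) {i j : ℕ} (hi : i ≤ m + 1) (hj : j ≤ m + 1)
    (h : p i = p j) : (i : ZMod 3) = j := by
  by_cases h0 : p 0 = p (m + 1)
  · obtain rfl := hp.eq_two_of_loop hG h0
    have hwrap : ∀ k ≤ 3, ∃ k' ≤ 2, p k' = p k ∧ (k' : ZMod 3) = k := by
      intro k hk
      rcases hk.eq_or_lt with rfl | hk
      exacts [⟨0, by lia, h0, by decide⟩, ⟨k, by lia, rfl, rfl⟩]
    obtain ⟨i', hi', hpi, hci⟩ := hwrap i hi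
    obtain ⟨j', hj', hpj, hcj⟩ := hwrap j hj
    rw [← hci, ← hcj, hp.injOn hi' hj' (by rw [hpi, hpj, h])]
  · rw [hp.injOn_succ hend h0 hi hj h]

theorem IsThread.exists_step (hp : IsThread G p m) (hG : ClawFree G)
    (hA : ∀ j : ℕ, 0 < j → ¬ HasAPath G (3 * j + 1))
    (hc₀ : ∀ u v, (threadGraph G).Adj u v → c₀ u ≠ c₀ v) :
    ∃ ε : ZMod 3, ε ≠ 0 ∧
      (IsBranch G (p (m + 1)) → c₀ (p (m + 1)) = c₀ (p 0) + (m + 1 : ℕ) * ε) := by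
  by_cases hend : IsBranch G (p (m + 1))
  swap
  · exact ⟨1, one_ne_zero, fun h => absurd h hend⟩
  by_cases h0 : p 0 = p (m + 1)
  · obtain rfl := hp.eq_two_of_loop hG h0
    have h3 : ((2 + 1 : ℕ) : ZMod 3) = 0 := by decide
    exact ⟨1, one_ne_zero, fun _ => by rw [← h0, h3, zero_mul, add_zero]⟩
  · have hm : ((m + 1 : ℕ) : ZMod 3) ≠ 0 := by
      rw [Ne, ZMod.natCast_eq_zero_iff]
      have := hp.mod_three_ne_two hend h0 hA
      lia
    have hne := hc₀ _ _ ⟨h0, p, m, hp, rfl, rfl, hend⟩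
    exact ⟨(c₀ (p (m + 1)) - c₀ (p 0)) / (m + 1 : ℕ), div_ne_zero (sub_ne_zero.2 hne.symm) hm,
      fun _ => by rw [mul_div_cancel₀ _ hm, add_sub_cancel]⟩

theorem exists_eqOn_of_prescribed {α : Type*} {c : V → α} {a : ℕ → α} {n : ℕ}
    (ha : ∀ i ≤ n, ∀ j ≤ n, p i = p j → a i = a j) (hc : ∀ i ≤ n, p i ∈ S → c (p i) = a i) :
    ∃ c' : V → α, Set.EqOn c' c S ∧ ∀ i ≤ n, c' (p i) = a i := by
  have hval : ∀ v, ∃ x, (v ∈ S → x = c v) ∧ ∀ i ≤ n, p i = v → x = a i := by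
    intro v
    by_cases hv : ∃ i ≤ n, p i = v
    · obtain ⟨i, hi, rfl⟩ := hv
      exact ⟨a i, fun hiS => (hc i hi hiS).symm, fun j hj h => ha i hi j hj h.symm⟩
    · exact ⟨c v, fun _ => rfl, fun i hi h => absurd ⟨i, hi, h⟩ hv⟩
  choose c' hc' using hval
  exact ⟨c', fun v => (hc' v).1, fun i hi => (hc' (p i)).2 i hi rfl⟩

theorem IsThread.injOn_of_arithmetic_of_lt (hp : IsThread G p m) {a ε : ZMod 3} (hε : ε ≠ 0)
    (hc : ∀ i ≤ m + 1, c (p i) = a + i * ε) {i : ℕ} (hi : i < m) :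
    Set.InjOn c (insert (p (i + 1)) (G.neighborSet (p (i + 1)))) := by
  have h01 : c (p i) ≠ c (p (i + 1)) := fun h => hε <| by
    rw [hc i (by lia), hc (i + 1) (by lia), Nat.cast_add, Nat.cast_one] at h
    linear_combination -h
  have h12 : c (p (i + 1)) ≠ c (p (i + 2)) := fun h => hε <| by
    rw [hc (i + 1) (by lia), hc (i + 2) (by lia), Nat.cast_add, Nat.cast_add] at h
    linear_combination -h
  have h02 : c (p i) ≠ c (p (i + 2)) := fun h => hε <| by
    rw [hc i (by lia), hc (i + 2) (by lia), Nat.cast_add] at h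
    linear_combination h + ε * (by decide : (3 : ZMod 3) = 0)
  rw [hp.neighborSet_eq hi]
  rintro u (rfl | rfl | rfl) w (rfl | rfl | rfl) h <;> grind

theorem IsThread.neighborSet_last_eq [Finite V] (hp : IsThread G p m)
    (hend : (G.neighborSet (p (m + 1))).ncard ≤ 1) : G.neighborSet (p (m + 1)) = {p m} :=
  (Set.eq_of_subset_of_ncard_le (Set.singleton_subset_iff.2 (hp.adj m le_rfl).symm)
    (by rwa [Set.ncard_singleton])).symm

theorem IsThread.neighborSet_subset [Finite V] (hp : IsThread G p m)
    (hend : IsBranch G (p (m + 1)) ∨ (G.neighborSet (p (m + 1))).ncard ≤ 1) {i : ℕ}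
    (hi : i ≤ m + 1) (hbranch : ¬ IsBranch G (p i)) :
    G.neighborSet (p i) ⊆ p '' Set.Iic (m + 1) := by
  rcases i with _ | i
  · exact absurd hp.isBranch_zero hbranch
  rcases Nat.lt_succ_iff_lt_or_eq.1 hi with hi | rfl
  · rw [hp.neighborSet_eq (by lia)]
    rintro _ (rfl | rfl)
    exacts [Set.mem_image_of_mem p (Set.mem_Iic.2 (by lia)),
      Set.mem_image_of_mem p (Set.mem_Iic.2 (by lia))]
  · rw [hp.neighborSet_last_eq (hend.resolve_left hbranch), Set.singleton_subset_iff]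
    exact Set.mem_image_of_mem p (Set.mem_Iic.2 (by lia))

theorem IsThread.injOn_of_arithmetic [Finite V] (hp : IsThread G p m)
    (hend : IsBranch G (p (m + 1)) ∨ (G.neighborSet (p (m + 1))).ncard ≤ 1) {a ε : ZMod 3}
    (hε : ε ≠ 0) (hc : ∀ i ≤ m + 1, c (p i) = a + i * ε) {i : ℕ} (hi : i ≤ m + 1)
    (hbranch : ¬ IsBranch G (p i)) : Set.InjOn c (insert (p i) (G.neighborSet (p i))) := by
  rcases i with _ | i
  · exact absurd hp.isBranch_zero hbranch
  rcases Nat.lt_succ_iff_lt_or_eq.1 hi with hi | rfl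
  · exact hp.injOn_of_arithmetic_of_lt hε hc (by lia)
  · rw [hp.neighborSet_last_eq (hend.resolve_left hbranch), Set.injOn_pair]
    refine fun h => absurd ?_ hε
    rw [hc _ le_rfl, hc i (by lia), Nat.cast_add, Nat.cast_one] at h
    linear_combination h

theorem IsPartialColoring.union_thread [Finite V] (hc : IsPartialColoring G c₀ S c)
    (hp : IsThread G p m)
    (hend : IsBranch G (p (m + 1)) ∨ (G.neighborSet (p (m + 1))).ncard ≤ 1) {c' : V → ZMod 3}
    (heq : Set.EqOn c' c S) {a ε : ZMod 3} (hε : ε ≠ 0)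
    (hc' : ∀ i ≤ m + 1, c' (p i) = a + i * ε) :
    IsPartialColoring G c₀ (S ∪ p '' Set.Iic (m + 1)) c' where
  mem_of_isBranch v hv := Or.inl (hc.mem_of_isBranch v hv)
  eq_of_isBranch v hv := (heq (hc.mem_of_isBranch v hv)).trans (hc.eq_of_isBranch v hv)
  neighborSet_subset := by
    rintro v (hv | ⟨i, hi, rfl⟩) hbranch
    · exact (hc.neighborSet_subset v hv hbranch).trans Set.subset_union_left
    · exact (hp.neighborSet_subset hend hi hbranch).trans Set.subset_union_right
  injOn := by
    rintro v (hv | ⟨i, hi, rfl⟩) hbranch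
    · exact (hc.injOn v hv hbranch).congr <|
        (heq.mono (Set.insert_subset hv (hc.neighborSet_subset v hv hbranch))).symm
    · exact hp.injOn_of_arithmetic hend hε hc' hi hbranch

theorem IsPartialColoring.exists_ssubset [Finite V] (hconn : G.Connected) (hG : ClawFree G)
    (hmax : ∀ v, (G.neighborSet v).ncard ≤ 3) (hbranch : ∃ v, IsBranch G v)
    (hA : ∀ j : ℕ, 0 < j → ¬ HasAPath G (3 * j + 1))
    (hc₀ : ∀ u v, (threadGraph G).Adj u v → c₀ u ≠ c₀ v) (hc : IsPartialColoring G c₀ S c)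
    (hS : S ≠ Set.univ) : ∃ T, S ⊂ T ∧ ∃ c', IsPartialColoring G c₀ T c' := by
  obtain ⟨v, hv⟩ := hbranch
  obtain ⟨w, hw⟩ := (Set.ne_univ_iff_exists_notMem S).1 hS
  obtain ⟨walk⟩ := hconn.preconnected v w
  obtain ⟨d, -, hd₁, hd₂⟩ := walk.exists_boundary_dart S (hc.mem_of_isBranch v hv) hw
  have hd : IsBranch G d.fst := by
    by_contra h
    exact hd₂ (hc.neighborSet_subset _ hd₁ h d.adj)
  obtain ⟨p, m, hp, -, h1, hend⟩ := exists_isThread hd d.adj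
  have hend' : IsBranch G (p (m + 1)) ∨ (G.neighborSet (p (m + 1))).ncard ≤ 1 := by
    have := hmax (p (m + 1))
    unfold IsBranch
    lia
  obtain ⟨ε, hε, hlast⟩ := hp.exists_step hG hA hc₀
  obtain ⟨c', heq, hc'⟩ := exists_eqOn_of_prescribed (p := p) (S := S) (c := c) (n := m + 1)
    (a := fun i => c₀ (p 0) + i * ε)
    (fun i hi j hj h => by simp only [hp.natCast_eq_of_eq hG hend hi hj h])
    (fun i hi hiS => by
      have hib := hc.isBranch_of_mem hp (h1 ▸ hd₂) hi hiS
      rw [hc.eq_of_isBranch _ hib]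
      rcases i with _ | i
      · simp
      · rcases Nat.lt_succ_iff_lt_or_eq.1 hi with hi | rfl
        exacts [absurd hib (hp.not_isBranch (by lia)), hlast hib])
  have hnew : p 1 ∈ S ∪ p '' Set.Iic (m + 1) := Or.inr ⟨1, by simp, rfl⟩
  exact ⟨_, Set.ssubset_iff_exists.2 ⟨Set.subset_union_left, p 1, hnew, h1 ▸ hd₂⟩, c',
    hc.union_thread hp hend' heq hε hc'⟩

theorem exists_isPartialColoring_univ [Finite V] (hconn : G.Connected) (hG : ClawFree G)
    (hmax : ∀ v, (G.neighborSet v).ncard ≤ 3) (hbranch : ∃ v, IsBranch G v)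
    (hA : ∀ j : ℕ, 0 < j → ¬ HasAPath G (3 * j + 1))
    (hc₀ : ∀ u v, (threadGraph G).Adj u v → c₀ u ≠ c₀ v) :
    ∃ c, IsPartialColoring G c₀ Set.univ c := by
  obtain ⟨S, ⟨c, hc⟩, hmaxS⟩ := Set.Finite.exists_maximal
    (Set.toFinite {S | ∃ c, IsPartialColoring G c₀ S c})
    ⟨_, c₀, isPartialColoring_setOf_isBranch G c₀⟩
  by_cases hS : S = Set.univ
  · exact ⟨c, hS ▸ hc⟩
  · obtain ⟨T, hST, hT⟩ := hc.exists_ssubset hconn hG hmax hbranch hA hc₀ hS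
    exact absurd (hmaxS hT hST.subset) hST.not_subset

theorem IsPartialColoring.isDynamicColoring (hG : ClawFree G)
    (hc₀ : ∀ u v, (threadGraph G).Adj u v → c₀ u ≠ c₀ v)
    (hc : IsPartialColoring G c₀ Set.univ c) : IsDynamicColoring G 3 c := by
  have hproper : ∀ ⦃u v⦄, G.Adj u v → c u ≠ c v := by
    intro u v huv
    by_cases hu : IsBranch G u
    swap
    · exact fun h => huv.ne (hc.injOn u trivial hu (Or.inl rfl) (Or.inr huv) h)
    by_cases hv : IsBranch G v
    swap
    · exact fun h => huv.ne (hc.injOn v trivial hv (Or.inr huv.symm) (Or.inl rfl) h)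
    rw [hc.eq_of_isBranch u hu, hc.eq_of_isBranch v hv]
    exact hc₀ u v ⟨huv.ne, _, 0, isThread_zero hu huv, rfl, rfl, hv⟩
  refine ⟨hproper, fun v hv2 => ?_⟩
  by_cases hv : IsBranch G v
  · obtain ⟨x, y, hvx, hvy, hxy⟩ := hG.exists_adj hv
    exact ⟨x, y, hvx, hvy, hproper hxy⟩
  · obtain ⟨x, hx, y, hy, hxy⟩ := (Set.one_lt_ncard (Set.finite_of_ncard_ne_zero (by lia))).1 hv2
    exact ⟨x, y, hx, hy, fun h => hxy (hc.injOn v trivial hv (Or.inr hx) (Or.inr hy) h)⟩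

end Extension

section Obstruction

variable {V W : Type*} {G : SimpleGraph V} {H : SimpleGraph W} {k : ℕ} {p : ℕ → V} {m : ℕ}

theorem IsDynamicColoring.comp_iso {c : W → Fin k} (hc : IsDynamicColoring H k c) (f : G ≃g H) :
    IsDynamicColoring G k (c ∘ f) := by
  refine ⟨fun u v huv => hc.1 (f.map_adj_iff.2 huv), fun v hv => ?_⟩
  rw [Set.ncard_congr' (f.mapNeighborSet v)] at hv
  obtain ⟨x, y, hx, hy, hxy⟩ := hc.2 (f v) hv
  refine ⟨f.symm x, f.symm y, ?_, ?_, by simpa using hxy⟩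
  · rwa [← f.map_adj_iff, f.apply_symm_apply]
  · rwa [← f.map_adj_iff, f.apply_symm_apply]

theorem IsDynamicColoring.apply_ne_apply_add_two {c : V → Fin k} (hc : IsDynamicColoring G k c)
    (hp : IsThread G p m) {i : ℕ} (hi : i < m) : c (p i) ≠ c (p (i + 2)) := by
  obtain ⟨x, y, hx, hy, hxy⟩ := hc.2 (p (i + 1)) (hp.ncard_eq_two i hi).ge
  rcases (hp.adj_iff hi).1 hx with rfl | rfl <;> rcases (hp.adj_iff hi).1 hy with rfl | rfl
  exacts [absurd rfl hxy, hxy, hxy.symm, absurd rfl hxy]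

theorem IsDynamicColoring.apply_add_three {c : V → Fin 3} (hc : IsDynamicColoring G 3 c)
    (hp : IsThread G p m) {i : ℕ} (hi : i + 1 < m) : c (p (i + 3)) = c (p i) := by
  have h01 := hc.1 (hp.adj i (by lia))
  have h12 := hc.1 (hp.adj (i + 1) (by lia))
  have h23 := hc.1 (hp.adj (i + 2) (by lia))
  have h02 := hc.apply_ne_apply_add_two hp (i := i) (by lia)
  have h13 := hc.apply_ne_apply_add_two hp hi
  lia

theorem IsDynamicColoring.apply_eq_apply_mod_three {c : V → Fin 3} (hc : IsDynamicColoring G 3 c)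
    (hp : IsThread G p m) {i : ℕ} (hi : i ≤ m + 1) : c (p i) = c (p (i % 3)) := by
  induction i using Nat.strong_induction_on with
  | h i ih =>
    rcases lt_or_ge i 3 with hlt | hge
    · rw [Nat.mod_eq_of_lt hlt]
    · obtain ⟨i, rfl⟩ := Nat.exists_eq_add_of_le' hge
      rw [hc.apply_add_three hp (by lia), ih i (by lia) (by lia), Nat.add_mod_right]

/-- In a proper 3-coloring the two vertices off the common edge of two triangles get the same color,
and the colors along the thread joining them have period 3. -/
theorem IsDynamicColoring.mod_three_eq_two {c : V → Fin 3} (hc : IsDynamicColoring G 3 c)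
    (hp : IsThread G p m) {x y : V} (hxy : G.Adj x y) (h0x : G.Adj (p 0) x) (h0y : G.Adj (p 0) y)
    (hx : G.Adj (p (m + 1)) x) (hy : G.Adj (p (m + 1)) y) : m % 3 = 2 := by
  have hends : c (p (m + 1)) = c (p 0) := by
    have := hc.1 hxy
    have := hc.1 h0x
    have := hc.1 h0y
    have := hc.1 hx
    have := hc.1 hy
    lia
  rw [hc.apply_eq_apply_mod_three hp le_rfl] at hends
  rcases (by lia : (m + 1) % 3 = 0 ∨ (m + 1) % 3 = 1 ∨ (m + 1) % 3 = 2 ∧ 0 < m) with h | h | ⟨h, hm⟩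
  · lia
  · exact absurd (h ▸ hends).symm (hc.1 (hp.adj 0 m.zero_le))
  · exact absurd (h ▸ hends).symm (hc.apply_ne_apply_add_two hp hm)

theorem K4sub.not_isDynamicColoring (hm : m % 3 ≠ 2) (c : Fin (m + 2) ⊕ Fin 2 → Fin 3) :
    ¬ IsDynamicColoring (K4sub m) 3 c := fun hc =>
  hm <| hc.mod_three_eq_two (K4sub.isThread m) (x := .inr 0) (y := .inr 1) (by simp) (by simp)
    (by simp) (by simp) (by simp)

end Obstruction

/-- A connected claw-free graph with `Δ(G) = 3` containing no `A_{3j+1}` (`j ≥ 1`)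
has a dynamic 3-coloring iff it is not isomorphic to a graph obtained from `K_4`
by subdividing one edge `m` times with `m ≡ 0` or `1 (mod 3)`. -/
theorem dynamic_three_colorable_iff_not_K4sub {V : Type*} [Fintype V]
    (G : SimpleGraph V) (hconn : G.Connected) (hclaw : ClawFree G)
    (hmax : ∀ v : V, (G.neighborSet v).ncard ≤ 3)
    (hmax' : ∃ v : V, (G.neighborSet v).ncard = 3)
    (hA : ∀ j : ℕ, 0 < j → ¬ HasAPath G (3 * j + 1)) :
    (∃ c : V → Fin 3, IsDynamicColoring G 3 c) ↔
      ¬ ∃ m : ℕ, (m % 3 = 0 ∨ m % 3 = 1) ∧ Nonempty (G ≃g K4sub m) := by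
  constructor
  · rintro ⟨c, hc⟩ ⟨m, hm, ⟨f⟩⟩
    exact K4sub.not_isDynamicColoring (by lia) _ (hc.comp_iso f.symm)
  · intro hK4
    obtain ⟨c₀⟩ := colorable_of_ncard_neighborSet_le le_rfl
      (fun v => (ncard_threadGraph_neighborSet_le G v).trans (hmax v))
      (cliqueFree_four_threadGraph hconn hclaw hA hK4)
    have hc₀ : ∀ u v, (threadGraph G).Adj u v → c₀ u ≠ c₀ v := fun _ _ => c₀.valid
    obtain ⟨c, hc⟩ := exists_isPartialColoring_univ hconn hclaw hmax hmax' hA hc₀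
    exact ⟨c, hc.isDynamicColoring hclaw hc₀⟩
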